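/- Let d ≥ 2 and κ > 0. There exists exactly one differentiable function e : (−1,1) → ℝ with ∫_{−1}^{1} (1−r²)^{(d+1)/2} e(r)² dr < ∞ and ∫_{−1}^{1} (1−r²)^{(d+3)/2} e'(r)² dr < ∞, such that for every differentiable ℓ : (−1,1) → ℝ with ∫(1−r²)^{(d+1)/2}ℓ² dr < ∞ and ∫(1−r²)^{(d+3)/2}(ℓ')² dr < ∞, one has ∫_{−1}^{1} (1−r²)^{(d+3)/2} e^{κr²/2} e'(r) ℓ'(r) dr + 2 ∫_{−1}^{1} (1−r²)^{(d+1)/2} (κr² + d) e^{κr²/2} e(r) ℓ(r) dr = − ∫_{−1}^{1} r (1−r²)^{(d+1)/2} e^{κr²/2} ℓ(r) dr (the weak formulation of −2(1−r²)^{(d+1)/2}e^{κr²/2}(κr²+d)e + d/dr[(1−r²)^{(d+3)/2}e^{κr²/2}e'] = r(1−r²)^{(d+1)/2}e^{κr²/2}). Moreover this e is odd and satisfies e(r) ≤ 0 for all r ∈ [0,1). -/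

import Mathlib

/-! Write `p = (1 - r²)^((d+3)/2) e^{κr²/2}`, `w = (1 - r²)^((d+1)/2) e^{κr²/2}`, `q = 2 (κr² + d) w`,
so that the equation reads `(p e')' = q e + r w`.

*Uniqueness.* The difference of two solutions is admissible as a test function, and the quadratic
form `∫ p k'² + ∫ q k²` is definite (`Sol.unique`).

*Existence.* On `[0, 1]` the equation is integrated twice from the singular endpoint `1`:
`e r = α + ∫_r^1 p(t)⁻¹ ∫_t^1 (q e + s w) ds dt`. Since `w` is, up to constants, nonincreasing on
`[0, 1]` and `p t ≥ (1 - t) (1 - t²)^((d+1)/2)`, the kernel of this Volterra equation is bounded, and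
an iterate of the integral operator is a contraction of `C([0, 1])` (`exists_volterra`). Let `φ`
solve the homogeneous equation with `φ 1 = 1`, and `ψ` the inhomogeneous one with `ψ 1 = 0`. A
maximum principle for the flux formulation (`max_principle`) shows `φ 0 ≠ 0`, so that
`e = ψ - (ψ 0 / φ 0) φ` vanishes at `0`, and then that `e ≤ 0` on `[0, 1]`
(`exists_half_solution`). The flux `P = p e'` is bounded by a multiple of `p`, so `e'` is bounded.

*Weak formulation.* The odd extension `g` of `e` has an even flux `P |r|`. For an admissible test
function `m` the integrand on `(0, 1)` is `(P m)'`, and `P m / (1 - r)` is integrable because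
`|P| ≤ M p`; a nonzero limit of `P m` at `1` would contradict this, so the integral over `(0, 1)` is
`-P 0 * m 0` (`integral_eq_neg_left`). Applying this to `ℓ` and to its reflection, the boundary
terms at `0` cancel (`exists_sol`).
-/

open MeasureTheory Set

/-- `IsEProfile d κ g` says that `g` is differentiable on `(−1,1)`, belongs to the weighted
space `𝓗_{(d+1)/2,(d+3)/2}`, and satisfies the weak formulation of
`−2(1−r²)^{(d+1)/2}e^{κr²/2}(κr²+d)g + d/dr[(1−r²)^{(d+3)/2}e^{κr²/2}g'] =
r(1−r²)^{(d+1)/2}e^{κr²/2}` against every test function `ℓ` in the same space. -/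
def IsEProfile (d : ℕ) (κ : ℝ) (g : ℝ → ℝ) : Prop :=
  (∀ r ∈ Ioo (-1 : ℝ) 1, DifferentiableAt ℝ g r) ∧
  IntegrableOn (fun r : ℝ => (1 - r ^ 2) ^ (((d : ℝ) + 1) / 2) * g r ^ 2) (Ioo (-1 : ℝ) 1) ∧
  IntegrableOn (fun r : ℝ => (1 - r ^ 2) ^ (((d : ℝ) + 3) / 2) * deriv g r ^ 2)
    (Ioo (-1 : ℝ) 1) ∧
  ∀ ℓ : ℝ → ℝ,
    (∀ r ∈ Ioo (-1 : ℝ) 1, DifferentiableAt ℝ ℓ r) →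
    IntegrableOn (fun r : ℝ => (1 - r ^ 2) ^ (((d : ℝ) + 1) / 2) * ℓ r ^ 2) (Ioo (-1 : ℝ) 1) →
    IntegrableOn (fun r : ℝ => (1 - r ^ 2) ^ (((d : ℝ) + 3) / 2) * deriv ℓ r ^ 2)
      (Ioo (-1 : ℝ) 1) →
    (∫ r in Ioo (-1 : ℝ) 1,
        (1 - r ^ 2) ^ (((d : ℝ) + 3) / 2) * Real.exp (κ * r ^ 2 / 2) * deriv g r * deriv ℓ r)
      + 2 * (∫ r in Ioo (-1 : ℝ) 1,
          (1 - r ^ 2) ^ (((d : ℝ) + 1) / 2) * (κ * r ^ 2 + (d : ℝ)) *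
            Real.exp (κ * r ^ 2 / 2) * g r * ℓ r)
      = - ∫ r in Ioo (-1 : ℝ) 1,
          r * (1 - r ^ 2) ^ (((d : ℝ) + 1) / 2) * Real.exp (κ * r ^ 2 / 2) * ℓ r

/-! ### The Volterra equation at the singular endpoint -/

lemma abs_avg_le {f p : ℝ → ℝ} {B t : ℝ} (hp : 0 < p t) (ht : t ≤ 1)
    (hB : ∀ s ∈ Icc t 1, (1 - t) * |f s| ≤ B * p t) :
    |(∫ s in t..1, f s) / p t| ≤ B := by
  rcases ht.eq_or_lt with rfl | ht
  · have := hB 1 (by simp)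
    simp only [sub_self, zero_mul] at this
    simpa using nonneg_of_mul_nonneg_left this hp
  rw [abs_div, abs_of_pos hp, div_le_iff₀ hp]
  have h1 : (0:ℝ) < 1 - t := by linarith
  have := intervalIntegral.norm_integral_le_of_norm_le_const (f := f) (a := t) (b := 1)
    (C := B * p t / (1 - t)) (fun x hx => by
      rw [uIoc_of_le ht.le] at hx
      rw [Real.norm_eq_abs, le_div_iff₀ h1, mul_comm]
      exact hB x ⟨hx.1.le, hx.2⟩)
  rw [Real.norm_eq_abs, abs_of_pos h1, div_mul_cancel₀ _ h1.ne'] at this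
  exact this

lemma continuous_tail {f : ℝ → ℝ} (hf : Continuous f) :
    Continuous fun t => ∫ s in t..1, f s := by
  have : (fun t => ∫ s in t..1, f s) = fun t => - ∫ s in (1:ℝ)..t, f s := by
    ext t; rw [intervalIntegral.integral_symm]
  rw [this]
  exact (intervalIntegral.continuous_primitive (fun _ _ => hf.intervalIntegrable _ _) 1).neg

lemma intervalIntegrable_avg {f p : ℝ → ℝ} {B : ℝ} (hf : Continuous f) (hpc : Continuous p)
    (hp : ∀ t ∈ Ico (0:ℝ) 1, 0 < p t)
    (hB : ∀ t s, 0 ≤ t → t ≤ s → s ≤ 1 → (1 - t) * |f s| ≤ B * p t) :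
    IntervalIntegrable (fun t => (∫ s in t..1, f s) / p t) volume 0 1 := by
  rw [intervalIntegrable_iff_integrableOn_Ico_of_le zero_le_one]
  refine Measure.integrableOn_of_bounded (M := B) (by simp)
    (((continuous_tail hf).measurable.div hpc.measurable).aestronglyMeasurable) ?_
  filter_upwards [ae_restrict_mem measurableSet_Ico] with t ht
  exact abs_avg_le (hp t ht) ht.2.le (fun s hs => hB t s ht.1 hs.1 hs.2)

/-- The integral equation obtained by integrating `(p e')' = q e + h` twice from the singular
endpoint `1`, with prescribed value `e 1 = α`, has a continuous solution. The operator is of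
Volterra type with bounded kernel, so that an iterate of it is a contraction. -/
lemma exists_volterra {p q h : ℝ → ℝ} {C : ℝ} (hpc : Continuous p) (hqc : Continuous q)
    (hhc : Continuous h) (hp : ∀ t ∈ Ico (0:ℝ) 1, 0 < p t) (hC : 0 ≤ C)
    (hq : ∀ t s, 0 ≤ t → t ≤ s → s ≤ 1 → (1 - t) * |q s| ≤ C * p t)
    (hh : ∀ t s, 0 ≤ t → t ≤ s → s ≤ 1 → (1 - t) * |h s| ≤ C * p t) (α : ℝ) :
    ∃ e : ℝ → ℝ, Continuous e ∧ (∃ M, ∀ r, |e r| ≤ M) ∧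
      ∀ r ∈ Icc (0:ℝ) 1, e r = α + ∫ t in r..1, (∫ s in t..1, (q s * e s + h s)) / p t := by
  have hp0 : ∀ t, 0 ≤ t → t ≤ 1 → 0 ≤ p t := by
    intro t h0 h1
    rcases h1.eq_or_lt with rfl | h1
    · have : p 1 ∈ closure (Ici (0:ℝ)) := by
        refine ContinuousWithinAt.mem_closure (s := Ico 0 1) (f := p) (x := 1)
          hpc.continuousWithinAt ?_ (fun t ht => (hp t ht).le)
        rw [closure_Ico zero_ne_one]; simp
      simpa using this
    · exact (hp t ⟨h0, h1⟩).le
  let ext (u : C(Icc (0:ℝ) 1, ℝ)) : ℝ → ℝ := IccExtend (zero_le_one (α := ℝ)) u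
  have hext (u) : Continuous (ext u) := u.continuous.Icc_extend'
  have hextM (u) (s) : |ext u s| ≤ ‖u‖ := u.norm_coe_le_norm _
  have hbd (u : C(Icc (0:ℝ) 1, ℝ)) (t s : ℝ) (h0 : 0 ≤ t) (h1 : t ≤ s) (h2 : s ≤ 1) :
      (1 - t) * |q s * ext u s + h s| ≤ (C * ‖u‖ + C) * p t := by
    have e1 : |q s * ext u s + h s| ≤ |q s| * ‖u‖ + |h s| :=
      (abs_add_le _ _).trans (by rw [abs_mul]; gcongr; exact hextM u s)
    have e2 := mul_le_mul_of_nonneg_left e1 (by linarith : 0 ≤ 1 - t)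
    have e3 := mul_le_mul_of_nonneg_right (hq t s h0 h1 h2) (norm_nonneg u)
    have e4 := hh t s h0 h1 h2
    linarith
  have hfc (u) : Continuous fun s => q s * ext u s + h s := (hqc.mul (hext u)).add hhc
  have hint (u) := intervalIntegrable_avg (hfc u) hpc hp (hbd u)
  let N (u : C(Icc (0:ℝ) 1, ℝ)) : C(Icc (0:ℝ) 1, ℝ) :=
    ⟨fun r => α + ∫ t in (r:ℝ)..1, (∫ s in t..1, (q s * ext u s + h s)) / p t, by
      refine continuous_const.add ?_
      have := intervalIntegral.continuousOn_primitive_interval_left (a := 0) (b := 1)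
        (f := fun t => (∫ s in t..1, (q s * ext u s + h s)) / p t) (μ := volume) (by
          rw [uIcc_of_le zero_le_one]
          exact (intervalIntegrable_iff_integrableOn_Icc_of_le zero_le_one).1 (hint u))
      rw [uIcc_of_le zero_le_one] at this
      exact continuousOn_iff_continuous_domRestrict.1 this⟩
  have step (u v : C(Icc (0:ℝ) 1, ℝ)) (D : ℝ) (n : ℕ)
      (huv : ∀ s : Icc (0:ℝ) 1, |u s - v s| ≤ D * (1 - s) ^ n) (r : Icc (0:ℝ) 1) :
      |N u r - N v r| ≤ C * D / (n + 1) * (1 - r) ^ (n + 1) := by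
    obtain ⟨r, hr0, hr1⟩ := r
    have hD : 0 ≤ D := by
      have := (abs_nonneg _).trans (huv ⟨0, by simp⟩)
      simpa using this
    have hi (u) : IntervalIntegrable
        (fun t => (∫ s in t..1, (q s * ext u s + h s)) / p t) volume r 1 :=
      (hint u).mono_set (by
        rw [uIcc_of_le hr1, uIcc_of_le zero_le_one]; exact Icc_subset_Icc_left hr0)
    have e1 : N u ⟨r, hr0, hr1⟩ - N v ⟨r, hr0, hr1⟩ =
        ∫ t in r..1, (∫ s in t..1, q s * (ext u s - ext v s)) / p t := by
      change (α + _) - (α + _) = _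
      rw [add_sub_add_left_eq_sub, ← intervalIntegral.integral_sub (hi u) (hi v)]
      congr 1; ext t
      rw [← sub_div, ← intervalIntegral.integral_sub ((hfc u).intervalIntegrable _ _)
        ((hfc v).intervalIntegrable _ _)]
      congr 2; ext s; ring
    rw [e1]
    have e2 : ∫ t in r..1, C * D * (1 - t) ^ n = C * D / (n + 1) * (1 - r) ^ (n + 1) := by
      rw [intervalIntegral.integral_const_mul,
        intervalIntegral.integral_comp_sub_left (fun t : ℝ => t ^ n) 1, integral_pow]
      simp; ring
    rw [← e2, ← Real.norm_eq_abs]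
    have hgi : IntervalIntegrable (fun t : ℝ => C * D * (1 - t) ^ n) volume r 1 :=
      Continuous.intervalIntegrable (by fun_prop) _ _
    refine intervalIntegral.norm_integral_le_of_norm_le hr1 ?_ hgi
    refine ae_of_all _ fun t ht => ?_
    rcases ht.2.eq_or_lt with rfl | ht1
    · simp only [intervalIntegral.integral_same, zero_div, norm_zero]; positivity
    have ht0 : 0 ≤ t := hr0.trans ht.1.le
    refine abs_avg_le (hp t ⟨ht0, ht1⟩) ht1.le fun s hs => ?_
    have hs0 : 0 ≤ s := ht0.trans hs.1
    have e3 : |ext u s - ext v s| ≤ D * (1 - t) ^ n := by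
      have : |ext u s - ext v s| ≤ D * (1 - s) ^ n := by
        have := huv ⟨s, hs0, hs.2⟩
        simpa only [ext, IccExtend_of_mem (zero_le_one (α := ℝ)) _ ⟨hs0, hs.2⟩] using this
      refine this.trans ?_
      have := hs.2
      have := hs.1
      gcongr
    rw [abs_mul]
    calc (1 - t) * (|q s| * |ext u s - ext v s|)
        = ((1 - t) * |q s|) * |ext u s - ext v s| := by ring
      _ ≤ (C * p t) * (D * (1 - t) ^ n) :=
          mul_le_mul (hq t s ht0 hs.1 hs.2) e3 (abs_nonneg _)
            (mul_nonneg hC (hp0 t ht0 ht1.le))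
      _ = _ := by ring
  have iter (n : ℕ) (u v : C(Icc (0:ℝ) 1, ℝ)) (r : Icc (0:ℝ) 1) :
      |(N^[n] u) r - (N^[n] v) r| ≤ (C ^ n / n.factorial * dist u v) * (1 - r) ^ n := by
    induction n generalizing r with
    | zero => simpa [← Real.dist_eq] using ContinuousMap.dist_apply_le_dist (f := u) (g := v) r
    | succ n ih =>
      rw [Function.iterate_succ_apply', Function.iterate_succ_apply']
      refine (step _ _ _ _ ih r).trans (le_of_eq ?_)
      rw [Nat.factorial_succ]
      push_cast
      field_simp
      ring
  obtain ⟨n, hn⟩ := ((FloorSemiring.tendsto_pow_div_factorial_atTop C).eventually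
    (gt_mem_nhds one_half_pos)).exists
  have hcontr : ContractingWith (1/2) (N^[n]) := by
    refine ⟨by
      rw [← NNReal.coe_lt_coe]; norm_num, LipschitzWith.of_dist_le_mul fun u v => ?_⟩
    rw [ContinuousMap.dist_le (by positivity)]
    intro r
    refine (iter n u v r).trans ?_
    have h1 : (1 - (r:ℝ)) ^ n ≤ 1 :=
      pow_le_one₀ (by linarith [r.2.2]) (by linarith [r.2.1])
    calc _ ≤ C ^ n / n.factorial * dist u v * 1 := by gcongr
      _ ≤ _ := by
        rw [mul_one]
        have : (((1/2 : NNReal)) : ℝ) = 1/2 := by norm_num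
        rw [this]
        gcongr
  have hfix := hcontr.isFixedPt_fixedPoint_iterate
  set u := ContractingWith.fixedPoint N^[n] hcontr
  refine ⟨ext u, hext u, ⟨‖u‖, hextM u⟩, fun r hr => ?_⟩
  have h1 : N u ⟨r, hr⟩ = u ⟨r, hr⟩ := by rw [hfix]
  have h2 : ext u r = u ⟨r, hr⟩ := IccExtend_of_mem _ _ hr
  rw [h2, ← h1]
  rfl

/-! ### Maximum principle, boundary term and the half-interval problem -/

/-- Maximum principle. At the leftmost maximum point of `e`, if the maximum were positive, the flux
`P` would vanish and be nondecreasing to the left, hence be nonpositive there, so that `e`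
would be nonincreasing up to its leftmost maximum point. -/
lemma max_principle {e P p q h : ℝ → ℝ} (he : ContinuousOn e (Icc 0 1))
    (hP : ContinuousOn P (Icc 0 1)) (hp : ∀ t ∈ Ioo (0:ℝ) 1, 0 < p t)
    (hq : ∀ t ∈ Ioo (0:ℝ) 1, 0 ≤ q t) (hh : ∀ t ∈ Ioo (0:ℝ) 1, 0 ≤ h t)
    (hde : ∀ t ∈ Ioo (0:ℝ) 1, HasDerivAt e (P t / p t) t)
    (hdP : ∀ t ∈ Ioo (0:ℝ) 1, HasDerivAt P (q t * e t + h t) t)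
    (hP1 : P 1 = 0) (he0 : e 0 ≤ 0) : ∀ r ∈ Icc (0:ℝ) 1, e r ≤ 0 := by
  by_contra! hcon
  obtain ⟨r₁, hr₁, hpos⟩ := hcon
  obtain ⟨m, hm, hmax⟩ := isCompact_Icc.exists_isMaxOn ⟨r₁, hr₁⟩ he
  have hM : 0 < e m := hpos.trans_le (hmax hr₁)
  have hS : IsCompact (Icc (0:ℝ) 1 ∩ e ⁻¹' {e m}) :=
    isCompact_Icc.of_isClosed_subset (he.preimage_isClosed_of_isClosed isClosed_Icc
      isClosed_singleton) inter_subset_left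
  obtain ⟨r, ⟨hr, hre⟩, hleast⟩ := hS.exists_isLeast ⟨m, hm, rfl⟩
  replace hre : e r = e m := hre
  have hr0 : 0 < r := by
    rcases hr.1.eq_or_lt with h0 | h0
    · rw [← h0] at hre; linarith
    · exact h0
  have hPr : P r = 0 := by
    rcases hr.2.eq_or_lt with h1 | h1
    · rw [h1, hP1]
    · have hloc : IsLocalMax e r := by
        filter_upwards [Icc_mem_nhds hr0 h1] with x hx
        rw [hre]; exact hmax hx
      have := hloc.hasDerivAt_eq_zero (hde r ⟨hr0, h1⟩)
      exact (div_eq_zero_iff.1 this).resolve_right (hp r ⟨hr0, h1⟩).ne'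
  obtain ⟨c, hc0, hcr, hc⟩ : ∃ c, 0 ≤ c ∧ c < r ∧ ∀ x ∈ Ioc c r, 0 < e x := by
    have h1 : ∀ᶠ x in nhdsWithin r (Icc 0 r), 0 < e x := by
      have := (he r hr).mono (Icc_subset_Icc_right hr.2 : Icc 0 r ⊆ Icc 0 1)
      exact this.eventually (lt_mem_nhds (hre ▸ hM))
    rw [nhdsWithin_Icc_eq_nhdsLE hr0] at h1
    obtain ⟨l, hl, hsub⟩ := (mem_nhdsLE_iff_exists_Ioc_subset' hr0).1 h1
    exact ⟨max l 0, le_max_right _ _, max_lt hl hr0, fun x hx => hsub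
      ⟨(le_max_left _ _).trans_lt hx.1, hx.2⟩⟩
  let b := (c + r) / 2
  have hb1 : c < b := by simp only [b]; linarith
  have hb2 : b < r := by simp only [b]; linarith
  have hsub : Icc b r ⊆ Icc 0 1 := Icc_subset_Icc (by linarith) hr.2
  have hin : ∀ x ∈ Ioo b r, x ∈ Ioo (0:ℝ) 1 := fun x hx =>
    ⟨by linarith [hx.1], hx.2.trans_le hr.2⟩
  have hmono : MonotoneOn P (Icc b r) := by
    refine monotoneOn_of_hasDerivWithinAt_nonneg (convex_Icc _ _) (hP.mono hsub)
      (f' := fun t => q t * e t + h t) ?_ ?_ <;> rw [interior_Icc] <;> intro x hx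
    · exact (hdP x (hin x hx)).hasDerivWithinAt
    · exact add_nonneg (mul_nonneg (hq x (hin x hx)) (hc x ⟨hb1.trans hx.1, hx.2.le⟩).le)
        (hh x (hin x hx))
  have hanti : AntitoneOn e (Icc b r) := by
    refine antitoneOn_of_hasDerivWithinAt_nonpos (convex_Icc _ _) (he.mono hsub)
      (f' := fun t => P t / p t) ?_ ?_ <;> rw [interior_Icc] <;> intro x hx
    · exact (hde x (hin x hx)).hasDerivWithinAt
    · refine div_nonpos_of_nonpos_of_nonneg ?_ (hp x (hin x hx)).le
      rw [← hPr]
      exact hmono ⟨hx.1.le, hx.2.le⟩ ⟨hb2.le, le_rfl⟩ hx.2.le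
  have hbI : b ∈ Icc (0:ℝ) 1 := hsub ⟨le_rfl, hb2.le⟩
  have hbm : e b = e m := le_antisymm (hmax hbI)
    (hre ▸ hanti ⟨le_rfl, hb2.le⟩ ⟨hb2.le, le_rfl⟩ hb2.le)
  exact absurd (hleast ⟨hbI, hbm⟩) (not_le.2 hb2)

/-- Vanishing boundary term at the singular endpoint: if `f = F'` and `F / (1 - r)` are integrable
up to `1` then the limit of `F` at `1`, which exists, is zero. -/
lemma integral_eq_neg_left {F f : ℝ → ℝ} (hF : ContinuousOn F (Ico 0 1))
    (hd : ∀ t ∈ Ioo (0:ℝ) 1, HasDerivAt F (f t) t) (hf : IntervalIntegrable f volume 0 1)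
    (hi : IntegrableOn (fun r => F r / (1 - r)) (Ioo 0 1)) :
    ∫ t in (0:ℝ)..1, f t = - F 0 := by
  let G : ℝ → ℝ := fun r => F 0 + ∫ t in (0:ℝ)..r, f t
  have hG : ContinuousOn G (Icc 0 1) := by
    have := intervalIntegral.continuousOn_primitive_interval' hf (a := 0) (by simp)
    rw [uIcc_of_le zero_le_one] at this
    exact continuousOn_const.add this
  have hGF : ∀ r ∈ Ioo (0:ℝ) 1, G r = F r := by
    intro r hr
    have := intervalIntegral.integral_eq_sub_of_hasDerivAt_of_le hr.1.le
      (hF.mono fun x hx => ⟨hx.1, hx.2.trans_lt hr.2⟩)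
      (fun x hx => hd x ⟨hx.1, hx.2.trans hr.2⟩)
      (hf.mono_set (by
        rw [uIcc_of_le hr.1.le, uIcc_of_le zero_le_one]; exact Icc_subset_Icc_right hr.2.le))
    simp only [G, this]; ring
  suffices hG1 : G 1 = 0 by simp only [G] at hG1; linarith
  by_contra hne
  have h1 : ∀ᶠ x in nhdsWithin 1 (Icc 0 1), |G 1| / 2 < |G x| :=
    (hG 1 (by simp)).abs.eventually (lt_mem_nhds (half_lt_self (abs_pos.2 hne)))
  rw [nhdsWithin_Icc_eq_nhdsLE zero_lt_one] at h1
  obtain ⟨l, hl, hsub⟩ := (mem_nhdsLE_iff_exists_Ioc_subset' (zero_lt_one (α := ℝ))).1 h1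
  have hc1 : max l 0 < 1 := max_lt hl zero_lt_one
  have key : IntervalIntegrable (fun x : ℝ => (x - 1)⁻¹) volume (max l 0) 1 := by
    rw [intervalIntegrable_iff_integrableOn_Ioo_of_le hc1.le]
    have h2 : IntegrableOn (fun r => F r / (1 - r)) (Ioo (max l 0) 1) :=
      hi.mono_set (Ioo_subset_Ioo_left (le_max_right _ _))
    refine (h2.norm.const_mul (2 / |G 1|)).mono' (by fun_prop) ?_
    filter_upwards [ae_restrict_mem measurableSet_Ioo] with x hx
    have hx1 : x ∈ Ioo (0:ℝ) 1 := ⟨(le_max_right _ _).trans_lt hx.1, hx.2⟩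
    have hx2 : |G 1| / 2 < |F x| := by
      rw [← hGF x hx1]; exact hsub ⟨(le_max_left _ _).trans_lt hx.1, hx.2.le⟩
    have hx3 : 0 < 1 - x := by linarith [hx.2]
    have hpos := abs_pos.2 hne
    rw [norm_inv, norm_div, Real.norm_eq_abs, Real.norm_eq_abs, Real.norm_eq_abs, abs_sub_comm,
      abs_of_pos hx3]
    rw [div_mul_div_comm, inv_eq_one_div, div_le_div_iff₀ hx3 (by positivity)]
    nlinarith
  rw [intervalIntegrable_sub_inv_iff] at key
  rcases key with h | h
  · exact hc1.ne h
  · exact h (by simp)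

/-- On `[0, 1]`, the equation `(p e')' = q e + h` with `e 0 = 0` has a nonpositive solution which is
regular at the singular endpoint `1`; here `P = p e'`. -/
lemma exists_half_solution {p q h : ℝ → ℝ} {C : ℝ} (hpc : Continuous p) (hqc : Continuous q)
    (hhc : Continuous h) (hp : ∀ t ∈ Ico (0:ℝ) 1, 0 < p t) (hC : 0 ≤ C)
    (hq0 : ∀ t ∈ Ioo (0:ℝ) 1, 0 ≤ q t) (hh0 : ∀ t ∈ Ioo (0:ℝ) 1, 0 ≤ h t)
    (hq : ∀ t s, 0 ≤ t → t ≤ s → s ≤ 1 → (1 - t) * |q s| ≤ C * p t)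
    (hh : ∀ t s, 0 ≤ t → t ≤ s → s ≤ 1 → (1 - t) * |h s| ≤ C * p t) :
    ∃ e P : ℝ → ℝ, ∃ M : ℝ, Continuous e ∧ Continuous P ∧ e 0 = 0 ∧
      (∀ t ∈ Ioo (0:ℝ) 1, HasDerivAt e (P t / p t) t) ∧
      (∀ t ∈ Ioo (0:ℝ) 1, HasDerivAt P (q t * e t + h t) t) ∧
      (∀ t ∈ Ico (0:ℝ) 1, |P t| ≤ M * p t) ∧ (∀ t ∈ Icc (0:ℝ) 1, e t ≤ 0) := by
  have aux : ∀ h : ℝ → ℝ, Continuous h →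
      (∀ t s, 0 ≤ t → t ≤ s → s ≤ 1 → (1 - t) * |h s| ≤ C * p t) → ∀ α : ℝ,
      ∃ e P : ℝ → ℝ, ∃ M : ℝ, Continuous e ∧ Continuous P ∧ e 1 = α ∧ P 1 = 0 ∧
      (∀ t ∈ Ioo (0:ℝ) 1, HasDerivAt e (P t / p t) t) ∧
      (∀ t ∈ Ioo (0:ℝ) 1, HasDerivAt P (q t * e t + h t) t) ∧
      (∀ t ∈ Ico (0:ℝ) 1, |P t| ≤ M * p t) := by
    intro h hhc hh α
    obtain ⟨e, hec, ⟨M, hM⟩, he⟩ := exists_volterra hpc hqc hhc hp hC hq hh α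
    have hfc : Continuous fun s => q s * e s + h s := (hqc.mul hec).add hhc
    have hM0 : 0 ≤ M := (abs_nonneg _).trans (hM 0)
    have hbd (t s : ℝ) (h0 : 0 ≤ t) (h1 : t ≤ s) (h2 : s ≤ 1) :
        (1 - t) * |q s * e s + h s| ≤ (C * M + C) * p t := by
      have e1 : |q s * e s + h s| ≤ |q s| * M + |h s| :=
        (abs_add_le _ _).trans (by rw [abs_mul]; gcongr; exact hM s)
      have e2 := mul_le_mul_of_nonneg_left e1 (by linarith : 0 ≤ 1 - t)
      have e3 := mul_le_mul_of_nonneg_right (hq t s h0 h1 h2) hM0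
      have e4 := hh t s h0 h1 h2
      linarith
    have hint := intervalIntegrable_avg hfc hpc hp hbd
    refine ⟨e, fun t => -∫ s in t..1, (q s * e s + h s), C * M + C, hec,
      (continuous_tail hfc).neg, ?_, by simp, fun t ht => ?_, fun t ht => ?_, fun t ht => ?_⟩
    · simpa using he 1 (by simp)
    · have h1 : HasDerivAt (fun r => α + ∫ t in r..1, (∫ s in t..1, (q s * e s + h s)) / p t)
          (-((∫ s in t..1, (q s * e s + h s)) / p t)) t := by
        refine (intervalIntegral.integral_hasDerivAt_left (hint.mono_set ?_) ?_ ?_).const_add α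
        · rw [uIcc_of_le ht.2.le, uIcc_of_le zero_le_one]; exact Icc_subset_Icc_left ht.1.le
        · exact ((continuous_tail hfc).measurable.div
            hpc.measurable).stronglyMeasurable.stronglyMeasurableAtFilter
        · exact (continuous_tail hfc).continuousAt.div hpc.continuousAt
            (hp t ⟨ht.1.le, ht.2⟩).ne'
      rw [neg_div]
      refine h1.congr_of_eventuallyEq ?_
      filter_upwards [Icc_mem_nhds ht.1 ht.2] with x hx using he x hx
    · have := (intervalIntegral.integral_hasDerivAt_left (hfc.intervalIntegrable t 1)
        hfc.stronglyMeasurable.stronglyMeasurableAtFilter hfc.continuousAt).neg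
      rw [neg_neg] at this
      exact this
    · have := abs_avg_le (hp t ht) ht.2.le (fun s hs => hbd t s ht.1 hs.1 hs.2)
      rwa [abs_div, abs_of_pos (hp t ht), div_le_iff₀ (hp t ht), ← abs_neg] at this
  obtain ⟨φ, P₁, M₁, hφc, hP₁c, hφ1, hP₁1, hdφ, hdP₁, hM₁⟩ :=
    aux (fun _ => 0) continuous_const (fun t s h0 h1 h2 => by
      have := hq t s h0 h1 h2
      have := mul_nonneg (by linarith : 0 ≤ 1 - t) (abs_nonneg (q s))
      simp only [abs_zero, mul_zero]; linarith) 1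
  obtain ⟨ψ, P₂, M₂, hψc, hP₂c, hψ1, hP₂1, hdψ, hdP₂, hM₂⟩ := aux h hhc hh 0
  have hp' : ∀ t ∈ Ioo (0:ℝ) 1, 0 < p t := fun t ht => hp t ⟨ht.1.le, ht.2⟩
  -- The homogeneous solution does not vanish at `0`, by the maximum principle and `φ 1 = 1`.
  have hφ0 : φ 0 ≠ 0 := by
    intro h0
    have := max_principle hφc.continuousOn hP₁c.continuousOn hp' hq0 (fun _ _ => le_rfl)
      hdφ hdP₁ hP₁1 h0.le 1 (by simp)
    rw [hφ1] at this
    linarith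
  let c := -ψ 0 / φ 0
  have e0 : ψ 0 + c * φ 0 = 0 := by simp only [c]; field_simp; ring
  have hde : ∀ t ∈ Ioo (0:ℝ) 1,
      HasDerivAt (fun t => ψ t + c * φ t) ((P₂ t + c * P₁ t) / p t) t := by
    intro t ht
    exact ((hdψ t ht).add ((hdφ t ht).const_mul c)).congr_deriv (by ring)
  have hdP : ∀ t ∈ Ioo (0:ℝ) 1,
      HasDerivAt (fun t => P₂ t + c * P₁ t) (q t * (ψ t + c * φ t) + h t) t := by
    intro t ht
    exact ((hdP₂ t ht).add ((hdP₁ t ht).const_mul c)).congr_deriv (by ring)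
  have hec : Continuous fun t => ψ t + c * φ t := by fun_prop
  have hPc : Continuous fun t => P₂ t + c * P₁ t := by fun_prop
  refine ⟨fun t => ψ t + c * φ t, fun t => P₂ t + c * P₁ t, M₂ + |c| * M₁, hec, hPc, e0,
    hde, hdP, fun t ht => ?_, ?_⟩
  · have h1 := hM₂ t ht
    have h2 := mul_le_mul_of_nonneg_left (hM₁ t ht) (abs_nonneg c)
    have h3 := abs_add_le (P₂ t) (c * P₁ t)
    rw [abs_mul] at h3
    linarith
  · exact max_principle hec.continuousOn hPc.continuousOn hp' hq0 hh0 hde hdP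
      (by simp [hP₁1, hP₂1]) e0.le

/-! ### Weighted spaces and uniqueness -/

/-- The weight `(1 - r²)^s`. -/
noncomputable def wt (s r : ℝ) : ℝ := (1 - r ^ 2) ^ s

/-- Membership in the weighted space: `ℓ` is differentiable on `(-1, 1)`, and `ℓ` and `ℓ'` are
square integrable against `(1 - r²)^s` and `(1 - r²)^(s+1)` respectively. -/
def Adm (s : ℝ) (ℓ : ℝ → ℝ) : Prop :=
  (∀ r ∈ Ioo (-1 : ℝ) 1, DifferentiableAt ℝ ℓ r) ∧
  IntegrableOn (fun r : ℝ => wt s r * ℓ r ^ 2) (Ioo (-1 : ℝ) 1) ∧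
  IntegrableOn (fun r : ℝ => wt (s + 1) r * deriv ℓ r ^ 2) (Ioo (-1 : ℝ) 1)

lemma continuous_wt {s : ℝ} (hs : 0 ≤ s) : Continuous (wt s) :=
  Continuous.rpow_const (by fun_prop) fun _ => Or.inr hs

lemma one_sub_sq_pos {r : ℝ} (hr : r ∈ Ioo (-1 : ℝ) 1) : 0 < 1 - r ^ 2 := by
  nlinarith [hr.1, hr.2]

lemma wt_pos {s r : ℝ} (hr : r ∈ Ioo (-1 : ℝ) 1) : 0 < wt s r :=
  Real.rpow_pos_of_pos (one_sub_sq_pos hr) s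

lemma wt_neg (s r : ℝ) : wt s (-r) = wt s r := by simp [wt]

lemma wt_succ {s r : ℝ} (hr : r ∈ Ioo (-1 : ℝ) 1) : wt (s + 1) r = wt s r * (1 - r ^ 2) := by
  rw [wt, Real.rpow_add_one (one_sub_sq_pos hr).ne', wt]

lemma wt_anti {s t r : ℝ} (hs : 0 ≤ s) (h0 : 0 ≤ t) (h1 : t ≤ r) (h2 : r ≤ 1) :
    wt s r ≤ wt s t :=
  Real.rpow_le_rpow (by nlinarith) (by nlinarith) hs

lemma integrableOn_wt {s : ℝ} (hs : 0 ≤ s) : IntegrableOn (wt s) (Ioo (-1) 1) :=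
  ((continuous_wt hs).integrableOn_Icc (a := -1) (b := 1)).mono_set Ioo_subset_Icc_self

/-- Cauchy–Schwarz in the form needed to make all bilinear integrals converge. -/
lemma integrableOn_weight_mul {s : ℝ} {b f k : ℝ → ℝ} {B : ℝ} (hs : 0 ≤ s)
    (hb : ContinuousOn b (Ioo (-1) 1)) (hB : ∀ r ∈ Ioo (-1 : ℝ) 1, |b r| ≤ B)
    (hfm : AEStronglyMeasurable f (volume.restrict (Ioo (-1) 1)))
    (hkm : AEStronglyMeasurable k (volume.restrict (Ioo (-1) 1)))
    (hf : IntegrableOn (fun r => wt s r * f r ^ 2) (Ioo (-1) 1))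
    (hk : IntegrableOn (fun r => wt s r * k r ^ 2) (Ioo (-1) 1)) :
    IntegrableOn (fun r => wt s r * b r * f r * k r) (Ioo (-1) 1) := by
  refine ((hf.add hk).const_mul B).mono'
    ((((continuous_wt hs).aestronglyMeasurable.mul
      (hb.aestronglyMeasurable measurableSet_Ioo)).mul hfm).mul hkm) ?_
  filter_upwards [ae_restrict_mem measurableSet_Ioo] with r hr
  have hw := (wt_pos (s := s) hr).le
  have h1 : |f r| * |k r| ≤ f r ^ 2 + k r ^ 2 := by
    nlinarith [sq_nonneg (|f r| - |k r|), sq_abs (f r), sq_abs (k r), sq_nonneg (f r),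
      sq_nonneg (k r)]
  have h2 : |b r| * (|f r| * |k r|) ≤ B * (f r ^ 2 + k r ^ 2) :=
    mul_le_mul (hB r hr) h1 (by positivity) ((abs_nonneg _).trans (hB r hr))
  have h3 := mul_le_mul_of_nonneg_left h2 hw
  simp only [Real.norm_eq_abs, abs_mul, abs_of_nonneg hw, Pi.add_apply]
  linarith

lemma Adm.aesm {s : ℝ} {ℓ : ℝ → ℝ} (h : Adm s ℓ) :
    AEStronglyMeasurable ℓ (volume.restrict (Ioo (-1) 1)) :=
  (show ContinuousOn ℓ (Ioo (-1) 1) from fun r hr =>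
    (h.1 r hr).continuousAt.continuousWithinAt).aestronglyMeasurable measurableSet_Ioo

lemma deriv_aesm (ℓ : ℝ → ℝ) :
    AEStronglyMeasurable (deriv ℓ) (volume.restrict (Ioo (-1) 1)) :=
  (measurable_deriv ℓ).aestronglyMeasurable

lemma Adm.sub {s : ℝ} {f g : ℝ → ℝ} (hs : 0 ≤ s) (hf : Adm s f) (hg : Adm s g) :
    Adm s (fun r => f r - g r) := by
  refine ⟨fun r hr => (hf.1 r hr).sub (hg.1 r hr), ?_, ?_⟩
  · have h1 := integrableOn_weight_mul (b := fun _ => -2) (B := 2) hs continuousOn_const (by simp)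
      hf.aesm hg.aesm hf.2.1 hg.2.1
    refine ((hf.2.1.add hg.2.1).add h1).congr (ae_of_all _ fun r => ?_)
    simp only [Pi.add_apply]; ring
  · have h1 := integrableOn_weight_mul (b := fun _ => -2) (B := 2) (by linarith : 0 ≤ s + 1)
      continuousOn_const (by simp) (deriv_aesm f) (deriv_aesm g) hf.2.2 hg.2.2
    refine ((hf.2.2.add hg.2.2).add h1).congr ?_
    filter_upwards [ae_restrict_mem measurableSet_Ioo] with r hr
    rw [deriv_fun_sub (hf.1 r hr) (hg.1 r hr)]
    simp only [Pi.add_apply]; ring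

lemma Adm.comp_neg {s : ℝ} {ℓ : ℝ → ℝ} (h : Adm s ℓ) : Adm s (fun r => ℓ (-r)) := by
  have hset : -Ioo (-1 : ℝ) 1 = Ioo (-1) 1 := by simp
  refine ⟨fun r hr => ?_, ?_, ?_⟩
  · exact (h.1 (-r) ⟨by linarith [hr.2], by linarith [hr.1]⟩).comp r differentiableAt_id.neg
  · have := h.2.1.comp_neg
    rw [hset] at this
    simpa only [wt_neg] using this
  · have := h.2.2.comp_neg
    rw [hset] at this
    simpa only [wt_neg, deriv_comp_neg, neg_sq] using this

lemma exp_bound {κ r : ℝ} (hκ : 0 ≤ κ) (hr : r ∈ Icc (-1 : ℝ) 1) :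
    Real.exp (κ * r ^ 2 / 2) ≤ Real.exp (κ / 2) := by
  rw [Real.exp_le_exp]
  have : r ^ 2 ≤ 1 := by nlinarith [hr.1, hr.2]
  nlinarith

lemma int_deriv {s κ : ℝ} (hs : 0 ≤ s) (hκ : 0 ≤ κ) {g ℓ : ℝ → ℝ} (hg : Adm s g)
    (hl : Adm s ℓ) : IntegrableOn (fun r => wt (s + 1) r * Real.exp (κ * r ^ 2 / 2) * deriv g r *
      deriv ℓ r) (Ioo (-1) 1) :=
  integrableOn_weight_mul (B := Real.exp (κ / 2)) (by linarith)
    (Continuous.continuousOn (by fun_prop))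
    (fun r hr => by rw [Real.abs_exp]; exact exp_bound hκ (Ioo_subset_Icc_self hr))
    (deriv_aesm g) (deriv_aesm ℓ) hg.2.2 hl.2.2

lemma int_zero {s κ c : ℝ} (hs : 0 ≤ s) (hκ : 0 ≤ κ) (hc : 0 ≤ c) {g ℓ : ℝ → ℝ} (hg : Adm s g)
    (hl : Adm s ℓ) : IntegrableOn (fun r => wt s r * (κ * r ^ 2 + c) * Real.exp (κ * r ^ 2 / 2) *
      g r * ℓ r) (Ioo (-1) 1) := by
  have := integrableOn_weight_mul (s := s) (b := fun r => (κ * r ^ 2 + c) * Real.exp (κ * r ^ 2 / 2))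
    (B := (κ + c) * Real.exp (κ / 2)) hs
    (Continuous.continuousOn (by fun_prop))
    (fun r hr => by
      have h1 : r ^ 2 ≤ 1 := by nlinarith [hr.1, hr.2]
      have h2 := exp_bound hκ (Ioo_subset_Icc_self hr)
      rw [abs_mul, Real.abs_exp, abs_of_nonneg (by positivity)]
      gcongr
      nlinarith)
    hg.aesm hl.aesm hg.2.1 hl.2.1
  simpa only [mul_assoc] using this

lemma int_rhs {s κ : ℝ} (hs : 0 ≤ s) (hκ : 0 ≤ κ) {ℓ : ℝ → ℝ} (hl : Adm s ℓ) :
    IntegrableOn (fun r => r * wt s r * Real.exp (κ * r ^ 2 / 2) * ℓ r) (Ioo (-1) 1) := by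
  have := integrableOn_weight_mul (s := s) (b := fun r => r * Real.exp (κ * r ^ 2 / 2))
    (B := Real.exp (κ / 2)) (f := fun _ => 1) hs
    (Continuous.continuousOn (by fun_prop))
    (fun r hr => by
      have h1 : |r| ≤ 1 := abs_le.2 ⟨hr.1.le, hr.2.le⟩
      have h2 := exp_bound hκ (Ioo_subset_Icc_self hr)
      rw [abs_mul, Real.abs_exp]
      nlinarith [Real.exp_pos (κ * r ^ 2 / 2), abs_nonneg r])
    aestronglyMeasurable_const hl.aesm (by simpa using integrableOn_wt hs) hl.2.1
  refine this.congr (ae_of_all _ fun r => ?_)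
  ring

/-- The weak formulation, for a general weight exponent `s` and a general constant `c` in place of
the dimension. -/
def Sol (s κ c : ℝ) (g : ℝ → ℝ) : Prop :=
  Adm s g ∧ ∀ ℓ, Adm s ℓ →
    (∫ r in Ioo (-1 : ℝ) 1, wt (s + 1) r * Real.exp (κ * r ^ 2 / 2) * deriv g r * deriv ℓ r)
      + 2 * (∫ r in Ioo (-1 : ℝ) 1,
          wt s r * (κ * r ^ 2 + c) * Real.exp (κ * r ^ 2 / 2) * g r * ℓ r)
      = - ∫ r in Ioo (-1 : ℝ) 1, r * wt s r * Real.exp (κ * r ^ 2 / 2) * ℓ r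

/-- Testing the difference of two solutions against itself gives a vanishing sum of two nonnegative
integrals. -/
lemma Sol.unique {s κ c : ℝ} (hs : 0 ≤ s) (hκ : 0 ≤ κ) (hc : 0 < c) {f g : ℝ → ℝ}
    (hf : Sol s κ c f) (hg : Sol s κ c g) : EqOn f g (Ioo (-1) 1) := by
  have hk := Adm.sub hs hf.1 hg.1
  set k : ℝ → ℝ := fun r => f r - g r with hkdef
  have e := (hf.2 k hk).trans (hg.2 k hk).symm
  have e1 : (∫ r in Ioo (-1 : ℝ) 1,
        wt (s + 1) r * Real.exp (κ * r ^ 2 / 2) * deriv k r * deriv k r) =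
      (∫ r in Ioo (-1 : ℝ) 1, wt (s + 1) r * Real.exp (κ * r ^ 2 / 2) * deriv f r * deriv k r) -
      ∫ r in Ioo (-1 : ℝ) 1, wt (s + 1) r * Real.exp (κ * r ^ 2 / 2) * deriv g r * deriv k r := by
    rw [← integral_sub (int_deriv hs hκ hf.1 hk) (int_deriv hs hκ hg.1 hk)]
    refine setIntegral_congr_fun measurableSet_Ioo fun r hr => ?_
    have : deriv k r = deriv f r - deriv g r := deriv_fun_sub (hf.1.1 r hr) (hg.1.1 r hr)
    simp only [this]
    ring
  have e2 : (∫ r in Ioo (-1 : ℝ) 1,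
        wt s r * (κ * r ^ 2 + c) * Real.exp (κ * r ^ 2 / 2) * k r * k r) =
      (∫ r in Ioo (-1 : ℝ) 1,
        wt s r * (κ * r ^ 2 + c) * Real.exp (κ * r ^ 2 / 2) * f r * k r) -
      ∫ r in Ioo (-1 : ℝ) 1,
        wt s r * (κ * r ^ 2 + c) * Real.exp (κ * r ^ 2 / 2) * g r * k r := by
    rw [← integral_sub (int_zero hs hκ hc.le hf.1 hk) (int_zero hs hκ hc.le hg.1 hk)]
    refine setIntegral_congr_fun measurableSet_Ioo fun r hr => ?_
    simp only [hkdef]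
    ring
  have p1 : 0 ≤ ∫ r in Ioo (-1 : ℝ) 1,
      wt (s + 1) r * Real.exp (κ * r ^ 2 / 2) * deriv k r * deriv k r := by
    refine setIntegral_nonneg measurableSet_Ioo fun r hr => ?_
    rw [mul_assoc]
    exact mul_nonneg (mul_pos (wt_pos hr) (Real.exp_pos _)).le (mul_self_nonneg _)
  have p2 : ∀ r ∈ Ioo (-1 : ℝ) 1,
      0 ≤ wt s r * (κ * r ^ 2 + c) * Real.exp (κ * r ^ 2 / 2) * k r * k r := fun r hr => by
    rw [mul_assoc]
    have := wt_pos (s := s) hr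
    exact mul_nonneg (by positivity) (mul_self_nonneg _)
  have p3 := setIntegral_nonneg (μ := volume) measurableSet_Ioo p2
  have z : ∫ r in Ioo (-1 : ℝ) 1,
      wt s r * (κ * r ^ 2 + c) * Real.exp (κ * r ^ 2 / 2) * k r * k r = 0 := by
    linarith
  rw [setIntegral_eq_zero_iff_of_nonneg_ae ((ae_restrict_mem measurableSet_Ioo).mono p2)
    (int_zero hs hκ hc.le hk hk)] at z
  have kc : ContinuousOn k (Ioo (-1) 1) := fun r hr =>
    (hk.1 r hr).continuousAt.continuousWithinAt
  have wc := continuous_wt hs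
  have z' := Measure.eqOn_open_of_ae_eq z isOpen_Ioo
    ((Continuous.continuousOn (by fun_prop)).mul kc |>.mul kc) continuousOn_const
  intro r hr
  have h1 := z' hr
  have h3 : k r = 0 := by
    simpa [mul_assoc, (wt_pos (s := s) hr).ne', (by positivity : κ * r ^ 2 + c ≠ 0)] using h1
  simp only [hkdef] at h3
  linarith

/-! ### Existence -/

/-- The solution is the odd extension of the half-interval solution `e`, written as
`g r = ∫₀ʳ P |t| / p t dt` so that differentiability at `0` is automatic. -/
lemma exists_sol {s κ c : ℝ} (hs : 0 ≤ s) (hκ : 0 ≤ κ) (hc : 0 < c) :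
    ∃ g : ℝ → ℝ, Sol s κ c g ∧ (∀ r, g (-r) = - g r) ∧ ∀ r ∈ Ico (0 : ℝ) 1, g r ≤ 0 := by
  let E : ℝ → ℝ := fun r => Real.exp (κ * r ^ 2 / 2)
  have hEc : Continuous E := by fun_prop
  have hEpos (r) : 0 < E r := Real.exp_pos _
  have hE1 (r) : 1 ≤ E r := Real.one_le_exp (by positivity)
  have hEneg (r) : E (-r) = E r := by simp [E]
  have hwc := continuous_wt hs
  have hwc1 := continuous_wt (by linarith : 0 ≤ s + 1)
  let p : ℝ → ℝ := fun r => wt (s + 1) r * E r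
  let q : ℝ → ℝ := fun r => 2 * (wt s r * (κ * r ^ 2 + c) * E r)
  let h : ℝ → ℝ := fun r => r * wt s r * E r
  have hpc : Continuous p := hwc1.mul hEc
  have hqc : Continuous q := by fun_prop
  have hhc : Continuous h := by fun_prop
  have hsub {t : ℝ} (ht : t ∈ Ico (0:ℝ) 1) : t ∈ Ioo (-1 : ℝ) 1 :=
    ⟨by linarith [ht.1], ht.2⟩
  have hppos {t : ℝ} (ht : t ∈ Ioo (-1:ℝ) 1) : 0 < p t := mul_pos (wt_pos ht) (hEpos t)
  have hw0 {t : ℝ} (h0 : 0 ≤ t) (h1 : t ≤ 1) : 0 ≤ wt s t :=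
    Real.rpow_nonneg (by nlinarith) _
  -- Both coefficients are dominated by `wt s`, which is nonincreasing on `[0, 1]`, while
  -- `p t ≥ (1 - t) * wt s t`.
  have hkey {t r a A : ℝ} (h0 : 0 ≤ t) (h1 : t ≤ r) (h2 : r ≤ 1) (ha : a ≤ A * wt s r)
      (hA : 0 ≤ A) : (1 - t) * a ≤ A * p t := by
    rcases (h1.trans h2).eq_or_lt with rfl | ht
    · simp only [sub_self, zero_mul, p]
      exact mul_nonneg hA (mul_nonneg (Real.rpow_nonneg (by norm_num) _) (hEpos 1).le)
    have ht' : t ∈ Ioo (-1:ℝ) 1 := ⟨by linarith, ht⟩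
    have h3 : 0 ≤ 1 - t := by linarith
    have h4 := hw0 h0 ht.le
    have h5 : (1 - t) * wt s t ≤ p t := by
      simp only [p]
      rw [wt_succ ht']
      calc (1 - t) * wt s t = wt s t * (1 - t) * 1 := by ring
        _ ≤ wt s t * (1 - t ^ 2) * E t := by
          gcongr
          · exact mul_nonneg h4 (one_sub_sq_pos ht').le
          · nlinarith
          · exact hE1 t
    calc (1 - t) * a ≤ (1 - t) * (A * wt s t) := by
          gcongr
          exact ha.trans (by gcongr; exact wt_anti hs h0 h1 h2)
      _ = A * ((1 - t) * wt s t) := by ring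
      _ ≤ A * p t := by gcongr
  let C : ℝ := 2 * ((κ + c) * Real.exp (κ / 2)) + Real.exp (κ / 2)
  have hC : 0 ≤ C := by positivity
  have hq (t r : ℝ) (h0 : 0 ≤ t) (h1 : t ≤ r) (h2 : r ≤ 1) : (1 - t) * |q r| ≤ C * p t := by
    refine hkey h0 h1 h2 ?_ hC
    have hr0 := h0.trans h1
    have h3 := hw0 hr0 h2
    have h4 : E r ≤ Real.exp (κ / 2) := exp_bound hκ ⟨by linarith, h2⟩
    have h5 : κ * r ^ 2 + c ≤ κ + c := by
      have : r ^ 2 ≤ 1 := by nlinarith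
      nlinarith
    have h6 := (hEpos r).le
    have h7 : (κ * r ^ 2 + c) * E r ≤ (κ + c) * Real.exp (κ / 2) := by gcongr
    have h8 := mul_le_mul_of_nonneg_left h7 h3
    have h9 := mul_nonneg h3 (Real.exp_pos (κ / 2)).le
    simp only [q, C]
    rw [abs_of_nonneg (by positivity)]
    linarith
  have hh (t r : ℝ) (h0 : 0 ≤ t) (h1 : t ≤ r) (h2 : r ≤ 1) : (1 - t) * |h r| ≤ C * p t := by
    refine hkey h0 h1 h2 ?_ hC
    have hr0 := h0.trans h1
    have h3 := hw0 hr0 h2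
    have h4 : E r ≤ Real.exp (κ / 2) := exp_bound hκ ⟨by linarith, h2⟩
    have h6 := (hEpos r).le
    have h7 : r * E r ≤ 1 * Real.exp (κ / 2) := by gcongr
    have h8 := mul_le_mul_of_nonneg_left h7 h3
    have h9 : 0 ≤ wt s r * (2 * ((κ + c) * Real.exp (κ / 2))) := by positivity
    simp only [h, C]
    rw [abs_of_nonneg (by positivity)]
    linarith
  obtain ⟨e, P, M, hec, hPc, he0, hde, hdP, hPM, hneg⟩ := exists_half_solution hpc hqc hhc
    (fun t ht => hppos (hsub ht)) hC
    (fun t ht => by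
      have := wt_pos (s := s) (hsub ⟨ht.1.le, ht.2⟩)
      have := hEpos t
      simp only [q]
      positivity)
    (fun t ht => by
      have := wt_pos (s := s) (hsub ⟨ht.1.le, ht.2⟩)
      have := hEpos t
      have := ht.1
      simp only [h]
      positivity) hq hh
  have hpneg (t) : p (-t) = p t := by simp only [p, wt_neg, hEneg]
  have hpabs (t) : p |t| = p t := by
    rcases abs_choice t with h | h <;> rw [h]
    exact hpneg t
  have habs {t : ℝ} (ht : t ∈ Ioo (-1:ℝ) 1) : |t| ∈ Ico (0:ℝ) 1 :=
    ⟨abs_nonneg t, abs_lt.2 ht⟩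
  let v : ℝ → ℝ := fun t => P |t| / p t
  have hvc : ContinuousOn v (Ioo (-1) 1) :=
    (hPc.comp continuous_abs).continuousOn.div hpc.continuousOn fun t ht => (hppos ht).ne'
  have hvm : Measurable v := (hPc.comp continuous_abs).measurable.div hpc.measurable
  have hvM {t : ℝ} (ht : t ∈ Ioo (-1:ℝ) 1) : |v t| ≤ M := by
    rw [abs_div, abs_of_pos (hppos ht), div_le_iff₀ (hppos ht), ← hpabs t]
    exact hPM _ (habs ht)
  have hM0 : 0 ≤ M := (abs_nonneg _).trans (hvM (t := 0) (by simp))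
  have hvneg (t) : v (-t) = v t := by simp only [v, abs_neg, hpneg]
  let g : ℝ → ℝ := fun r => ∫ t in (0:ℝ)..r, v t
  have hvi {r : ℝ} (hr : r ∈ Ioo (-1:ℝ) 1) : IntervalIntegrable v volume 0 r :=
    (hvc.mono ((convex_Ioo (-1:ℝ) 1).ordConnected.uIcc_subset
      (by simp) hr)).intervalIntegrable
  have hgd {r : ℝ} (hr : r ∈ Ioo (-1:ℝ) 1) : HasDerivAt g (v r) r :=
    intervalIntegral.integral_hasDerivAt_right (hvi hr)
      hvm.stronglyMeasurable.stronglyMeasurableAtFilter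
      (hvc.continuousAt (isOpen_Ioo.mem_nhds hr))
  have hgodd (r) : g (-r) = - g r := by
    have := intervalIntegral.integral_comp_neg (a := 0) (b := r) v
    simp only [hvneg, neg_zero] at this
    simp only [g]
    rw [this, intervalIntegral.integral_symm]
  have hge {r : ℝ} (hr : r ∈ Ico (0:ℝ) 1) : g r = e r := by
    have h1 : ∫ t in (0:ℝ)..r, v t = e r - e 0 := by
      refine intervalIntegral.integral_eq_sub_of_hasDerivAt_of_le hr.1 hec.continuousOn
        (fun x hx => ?_) (hvi (hsub hr))
      have := hde x ⟨hx.1, hx.2.trans hr.2⟩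
      simpa only [v, abs_of_pos hx.1] using this
    simp only [g, h1, he0, sub_zero]
  have hgM {r : ℝ} (hr : r ∈ Ioo (-1:ℝ) 1) : |g r| ≤ M := by
    have := intervalIntegral.norm_integral_le_of_norm_le_const (f := v) (a := 0) (b := r) (C := M)
      (fun x hx => hvM ((convex_Ioo (-1:ℝ) 1).ordConnected.uIcc_subset (by simp) hr
        (uIoc_subset_uIcc hx)))
    rw [sub_zero, Real.norm_eq_abs] at this
    exact this.trans (mul_le_of_le_one_right hM0 (habs hr).2.le)
  have hgc : ContinuousOn g (Ioo (-1) 1) := fun r hr => (hgd hr).continuousAt.continuousWithinAt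
  have bddsq {σ : ℝ} (hσ : 0 ≤ σ) {f : ℝ → ℝ} (hf : ∀ r ∈ Ioo (-1:ℝ) 1, |f r| ≤ M)
      (hfm : AEStronglyMeasurable f (volume.restrict (Ioo (-1) 1))) :
      IntegrableOn (fun r => wt σ r * f r ^ 2) (Ioo (-1) 1) := by
    refine ((integrableOn_wt hσ).mul_const (M ^ 2)).mono'
      ((continuous_wt hσ).aestronglyMeasurable.mul (hfm.pow 2)) ?_
    filter_upwards [ae_restrict_mem measurableSet_Ioo] with r hr
    have hw := (wt_pos (s := σ) hr).le
    rw [Real.norm_eq_abs, abs_mul, abs_of_nonneg hw, abs_pow]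
    gcongr
    exact hf r hr
  have hgadm : Adm s g := by
    refine ⟨fun r hr => (hgd hr).differentiableAt,
      bddsq hs (fun r hr => hgM hr) (hgc.aestronglyMeasurable measurableSet_Ioo),
      bddsq (by linarith) (fun r hr => ?_) (deriv_aesm g)⟩
    rw [(hgd hr).deriv]
    exact hvM hr
  refine ⟨g, ⟨hgadm, fun ℓ hl => ?_⟩, hgodd, fun r hr => by
    rw [hge hr]; exact hneg r ⟨hr.1, hr.2.le⟩⟩
  -- `J m` is the integrand of the weak formulation tested against `m`; on `(0, 1)` it is the
  -- derivative of `P * m`.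
  let J : (ℝ → ℝ) → ℝ → ℝ := fun m r => P |r| * deriv m r + (q r * g r + h r) * m r
  have hJ (m : ℝ → ℝ) : ∀ r ∈ Ioo (-1:ℝ) 1,
      wt (s + 1) r * Real.exp (κ * r ^ 2 / 2) * deriv g r * deriv m r +
        2 * (wt s r * (κ * r ^ 2 + c) * Real.exp (κ * r ^ 2 / 2) * g r * m r) +
        r * wt s r * Real.exp (κ * r ^ 2 / 2) * m r = J m r := by
    intro r hr
    have h1 : wt (s + 1) r * Real.exp (κ * r ^ 2 / 2) * deriv g r = P |r| := by
      rw [(hgd hr).deriv]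
      exact mul_div_cancel₀ _ (hppos hr).ne'
    rw [h1]
    simp only [J, q, h, E]
    ring
  have hJi {m : ℝ → ℝ} (hm : Adm s m) : IntervalIntegrable (J m) volume (-1) 1 := by
    rw [intervalIntegrable_iff_integrableOn_Ioo_of_le (by norm_num)]
    refine (((int_deriv hs hκ hgadm hm).add ((int_zero hs hκ hc.le hgadm hm).const_mul 2)).add
      (int_rhs hs hκ hm)).congr ?_
    filter_upwards [ae_restrict_mem measurableSet_Ioo] with r hr using hJ m r hr
  have hJi0 {m : ℝ → ℝ} (hm : Adm s m) : IntervalIntegrable (J m) volume 0 1 :=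
    (hJi hm).mono_set (by
      rw [uIcc_of_le zero_le_one, uIcc_of_le (by norm_num)]
      exact Icc_subset_Icc_left (by norm_num))
  have hJi1 {m : ℝ → ℝ} (hm : Adm s m) : IntervalIntegrable (J m) volume (-1) 0 :=
    (hJi hm).mono_set (by
      rw [uIcc_of_le (by norm_num), uIcc_of_le (by norm_num)]
      exact Icc_subset_Icc_right (by norm_num))
  have half {m : ℝ → ℝ} (hm : Adm s m) : ∫ r in (0:ℝ)..1, J m r = - (P 0 * m 0) := by
    have hmc : ContinuousOn m (Ioo (-1) 1) := fun r hr =>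
      (hm.1 r hr).continuousAt.continuousWithinAt
    refine integral_eq_neg_left (F := fun r => P r * m r)
      (hPc.continuousOn.mul (hmc.mono fun r hr => hsub hr)) (fun r hr => ?_) (hJi0 hm) ?_
    · have hr' := hsub ⟨hr.1.le, hr.2⟩
      refine ((hdP r hr).mul (hm.1 r hr').hasDerivAt).congr_deriv ?_
      simp only [J, abs_of_pos hr.1, hge ⟨hr.1.le, hr.2⟩]
      ring
    · have hsub' : Ioo (0:ℝ) 1 ⊆ Ioo (-1) 1 := fun r hr => hsub ⟨hr.1.le, hr.2⟩
      have h1 := (integrableOn_weight_mul (b := fun _ => 1) (B := 1) (f := fun _ => 1) hs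
        continuousOn_const (by simp) aestronglyMeasurable_const hm.aesm
        (by simpa using integrableOn_wt hs) hm.2.1).mono_set hsub'
      refine (h1.norm.const_mul (M * (2 * Real.exp (κ / 2)))).mono' ?_ ?_
      · refine ContinuousOn.aestronglyMeasurable ?_ measurableSet_Ioo
        exact (hPc.continuousOn.mul (hmc.mono hsub')).div (by fun_prop)
          fun r hr => by linarith [hr.2]
      · filter_upwards [ae_restrict_mem measurableSet_Ioo] with r hr
        have hr' := hsub' hr
        have hw := (wt_pos (s := s) hr').le
        have h2 : 0 < 1 - r := by linarith [hr.2]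
        have h3 : |P r| ≤ M * p r := hPM r ⟨hr.1.le, hr.2⟩
        have h4 : p r ≤ wt s r * (2 * Real.exp (κ / 2)) * (1 - r) := by
          have h5 : E r ≤ Real.exp (κ / 2) := exp_bound hκ ⟨hr'.1.le, hr.2.le⟩
          have h6 : 1 - r ^ 2 ≤ 2 * (1 - r) := by nlinarith [hr.1, hr.2]
          simp only [p]
          rw [wt_succ hr']
          calc wt s r * (1 - r ^ 2) * E r
              ≤ wt s r * (2 * (1 - r)) * Real.exp (κ / 2) := by
                have := (hEpos r).le
                gcongr
            _ = _ := by ring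
        simp only [norm_mul, norm_div, Real.norm_eq_abs, abs_of_pos h2, abs_of_nonneg hw, mul_one]
        rw [div_le_iff₀ h2]
        calc |P r| * |m r| ≤ (M * (wt s r * (2 * Real.exp (κ / 2)) * (1 - r))) * |m r| := by
              gcongr
              exact h3.trans (by gcongr)
          _ = _ := by ring
  have hl' := hl.comp_neg
  have hrefl (r) : J ℓ (-r) = - J (fun r => ℓ (-r)) r := by
    have hqn : q (-r) = q r := by simp only [q, wt_neg, hEneg, neg_sq]
    have hhn : h (-r) = - h r := by simp only [h, wt_neg, hEneg]; ring
    simp only [J, abs_neg, hgodd, deriv_comp_neg, hqn, hhn]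
    ring
  have htot : ∫ r in (-1:ℝ)..1, J ℓ r = 0 := by
    rw [← intervalIntegral.integral_add_adjacent_intervals (hJi1 hl) (hJi0 hl), half hl]
    have h1 := intervalIntegral.integral_comp_neg (a := 0) (b := 1) (J ℓ)
    simp only [hrefl, intervalIntegral.integral_neg, half hl', neg_zero] at h1
    rw [← h1]
    ring
  have h12 : IntegrableOn (fun r => wt (s + 1) r * Real.exp (κ * r ^ 2 / 2) * deriv g r * deriv ℓ r +
      2 * (wt s r * (κ * r ^ 2 + c) * Real.exp (κ * r ^ 2 / 2) * g r * ℓ r)) (Ioo (-1) 1) :=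
    (int_deriv hs hκ hgadm hl).add ((int_zero hs hκ hc.le hgadm hl).const_mul 2)
  rw [intervalIntegral.integral_of_le (by norm_num), integral_Ioc_eq_integral_Ioo,
    ← setIntegral_congr_fun measurableSet_Ioo (hJ ℓ), integral_add h12 (int_rhs hs hκ hl),
    integral_add (int_deriv hs hκ hgadm hl) ((int_zero hs hκ hc.le hgadm hl).const_mul 2),
    integral_const_mul] at htot
  linarith

/-- existence, uniqueness (on `(−1,1)`), oddness and nonpositivity on `[0,1)`
of the profile `e`. -/
theorem stmt13 (d : ℕ) (hd : 2 ≤ d) (κ : ℝ) (hκ : 0 < κ) :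
    ∃ g : ℝ → ℝ, IsEProfile d κ g ∧
      (∀ g₂ : ℝ → ℝ, IsEProfile d κ g₂ → EqOn g₂ g (Ioo (-1 : ℝ) 1)) ∧
      (∀ r ∈ Ioo (-1 : ℝ) 1, g (-r) = - g r) ∧
      (∀ r ∈ Ico (0 : ℝ) 1, g r ≤ 0) := by
  have hs : (0:ℝ) ≤ ((d:ℝ) + 1) / 2 := by positivity
  have hc : (0:ℝ) < d := by exact_mod_cast (by omega : 0 < d)
  have hiff (g : ℝ → ℝ) : IsEProfile d κ g ↔ Sol (((d:ℝ) + 1) / 2) κ d g := by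
    have h1 : ((d:ℝ) + 3) / 2 = ((d:ℝ) + 1) / 2 + 1 := by ring
    unfold IsEProfile Sol Adm wt
    simp only [h1, and_imp, and_assoc]
  obtain ⟨g, hg, hodd, hneg⟩ := exists_sol hs hκ.le hc
  exact ⟨g, (hiff g).2 hg, fun g₂ h₂ => Sol.unique hs hκ.le hc ((hiff g₂).1 h₂) hg,
    fun r _ => hodd r, hneg⟩
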